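/- arXiv:math-ph/9904013 — 2 statements merged into one kernel-verified Lean document; each statement's English description precedes it below -/
import Mathlib

section
/- For every integer n ≥ 2 there exists a unique function η : [0,∞) → ℝ that is twice continuously differentiable, satisfies η''(z) = (2κ z η(z) + η(z)²)^n for all z ≥ 0, η'(0) = −κ, lim_{z→∞} η(z) = 0, and η(z) > 0 for all z ≥ 0. -/
noncomputable def kap : ℝ := 1 / Real.sqrt Real.pi

/-- The reactive profile: positive, C² on [0,∞), satisfies η'' = (2κzη+η²)ⁿ,
η'(0) = −κ, η → 0 at ∞. -/
def IsReactiveProfile (n : ℕ) (η : ℝ → ℝ) : Prop :=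
  ContDiffOn ℝ 2 η (Set.Ici 0) ∧
  (∀ z ∈ Set.Ici (0:ℝ), 0 < η z) ∧
  (∀ z ∈ Set.Ici (0:ℝ),
    derivWithin (derivWithin η (Set.Ici 0)) (Set.Ici 0) z
      = (2 * kap * z * η z + (η z) ^ 2) ^ n) ∧
  derivWithin η (Set.Ici 0) 0 = -kap ∧
  Filter.Tendsto η Filter.atTop (nhds 0)

open Set Filter Topology MeasureTheory

lemma kap_pos : 0 < kap := by
  unfold kap
  have := Real.sqrt_pos.mpr Real.pi_pos
  positivity

lemma kap_le : kap ≤ 1 := by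
  unfold kap
  rw [div_le_one (Real.sqrt_pos.mpr Real.pi_pos)]
  rw [Real.one_le_sqrt]
  linarith [Real.pi_gt_three]

noncomputable def clp (y : ℝ) : ℝ := max 0 (min y 3)

lemma clp_nonneg (y : ℝ) : 0 ≤ clp y := le_max_left _ _
lemma clp_le (y : ℝ) : clp y ≤ 3 := by simp [clp]
lemma clp_mono : Monotone clp := by
  intro a b h
  unfold clp
  gcongr
lemma clp_cont : Continuous clp := by unfold clp; fun_prop
lemma clp_lip (x y : ℝ) : |clp x - clp y| ≤ |x - y| := by
  unfold clp
  grind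
lemma clp_eq {y : ℝ} (h0 : 0 ≤ y) (h3 : y ≤ 3) : clp y = y := by
  unfold clp
  grind
lemma clp_neg {y : ℝ} (h0 : y ≤ 0) : clp y = 0 := by
  unfold clp
  grind

noncomputable def GG (n : ℕ) (s y : ℝ) : ℝ := (2 * kap * max s 0 * clp y + (clp y) ^ 2) ^ n

lemma base_nonneg (s y : ℝ) : 0 ≤ 2 * kap * max s 0 * clp y + (clp y) ^ 2 := by
  have := clp_nonneg y
  have := kap_pos
  have : 0 ≤ max s 0 := le_max_right _ _
  positivity

lemma GG_nonneg (n : ℕ) (s y : ℝ) : 0 ≤ GG n s y := pow_nonneg (base_nonneg s y) n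

lemma GG_mono (n : ℕ) (s : ℝ) {x y : ℝ} (h : clp x ≤ clp y) : GG n s x ≤ GG n s y := by
  unfold GG
  have := clp_nonneg x
  have := kap_pos
  have h2 : 0 ≤ max s 0 := le_max_right _ _
  have := base_nonneg s x
  gcongr

lemma clp_three : clp 3 = 3 := clp_eq (by norm_num) le_rfl

lemma GG_le (n : ℕ) (s y : ℝ) : GG n s y ≤ GG n s 3 :=
  GG_mono n s (by rw [clp_three]; exact clp_le y)

lemma GG_cont (n : ℕ) : Continuous (fun p : ℝ × ℝ => GG n p.1 p.2) := by
  unfold GG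
  have := clp_cont
  fun_prop

lemma GG_zero {n : ℕ} (hn : 2 ≤ n) (s : ℝ) {y : ℝ} (h : y ≤ 0) : GG n s y = 0 := by
  unfold GG
  rw [clp_neg h]
  simp
  omega

lemma GG_lower (n : ℕ) (s : ℝ) {y c : ℝ} (hc : 0 ≤ c) (h : c ≤ clp y) : (c ^ 2) ^ n ≤ GG n s y := by
  unfold GG
  have := clp_nonneg y
  have := kap_pos
  have h2 : 0 ≤ max s 0 := le_max_right _ _
  have h3 : c ^ 2 ≤ clp y ^ 2 := by gcongr
  have : 0 ≤ 2 * kap * max s 0 * clp y := by positivity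
  gcongr
  linarith

lemma GG_lip (n : ℕ) (T : ℝ) (hT : 0 ≤ T) : ∃ K : NNReal, ∀ s ∈ Icc 0 T, ∀ x y : ℝ,
    |GG n s x - GG n s y| ≤ K * |x - y| := by
  set R : ℝ := 6 * T + 9 with hR
  have hR0 : 0 ≤ R := by positivity
  refine ⟨Real.toNNReal ((2 * T + 6) * n * R ^ (n-1)), ?_⟩
  intro s hs x y
  have hk := kap_pos
  have hk1 := kap_le
  have hb : ∀ y, |2 * kap * max s 0 * clp y + (clp y) ^ 2| ≤ R := by
    intro y
    rw [abs_of_nonneg (base_nonneg s y), max_eq_left hs.1]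
    have h0 := clp_nonneg y
    have h1 := clp_le y
    have h2 := hs.1
    have h3 := hs.2
    calc 2 * kap * s * clp y + clp y ^ 2 ≤ 2 * 1 * T * 3 + 3 ^ 2 := by gcongr
      _ = R := by rw [hR]; ring
  have hd : |(2 * kap * max s 0 * clp x + (clp x) ^ 2) - (2 * kap * max s 0 * clp y + (clp y) ^ 2)|
      ≤ (2 * T + 6) * |x - y| := by
    have e : (2 * kap * max s 0 * clp x + (clp x) ^ 2) - (2 * kap * max s 0 * clp y + (clp y) ^ 2)
      = (2 * kap * max s 0 + (clp x + clp y)) * (clp x - clp y) := by ring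
    have h2 := hs.1
    have h3 := hs.2
    have h0 := clp_nonneg y
    have h1 := clp_le y
    have h0' := clp_nonneg x
    have h1' := clp_le x
    rw [e, abs_mul, max_eq_left hs.1]
    rw [abs_of_nonneg (by positivity)]
    have : 2 * kap * s + (clp x + clp y) ≤ 2 * 1 * T + (3 + 3) := by gcongr
    have := clp_lip x y
    refine mul_le_mul (by linarith) this (abs_nonneg _) (by positivity)
  have := abs_pow_sub_pow_le (2 * kap * max s 0 * clp x + (clp x) ^ 2)
    (2 * kap * max s 0 * clp y + (clp y) ^ 2) n
  unfold GG
  refine this.trans ?_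
  calc _ ≤ ((2 * T + 6) * |x - y|) * n * R ^ (n-1) := by
        gcongr
        exact max_le (hb x) (hb y)
    _ = _ := by
      rw [Real.coe_toNNReal _ (by positivity)]; ring

noncomputable def JJ (n : ℕ) (y : ℝ → ℝ) (z : ℝ) : ℝ :=
  ∫ t in (0:ℝ)..z, ∫ s in (0:ℝ)..t, GG n s (y s)

lemma GGi_meas (n : ℕ) {y : ℝ → ℝ} (hy : Measurable y) : Measurable (fun s => GG n s (y s)) :=
  (GG_cont n).measurable.comp (measurable_id.prodMk hy)

lemma GG3_cont (n : ℕ) : Continuous (fun s => GG n s 3) :=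
  (GG_cont n).comp (by fun_prop : Continuous fun s : ℝ => (s, (3:ℝ)))

lemma GGi_int (n : ℕ) {y : ℝ → ℝ} (hy : Measurable y) (a b : ℝ) :
    IntervalIntegrable (fun s => GG n s (y s)) volume a b := by
  refine ((GG3_cont n).intervalIntegrable a b).mono_fun
    (GGi_meas n hy).aestronglyMeasurable ?_
  refine Filter.Eventually.of_forall fun s => ?_
  simp only [Real.norm_eq_abs]
  rw [abs_of_nonneg (GG_nonneg _ _ _), abs_of_nonneg (GG_nonneg _ _ _)]
  exact GG_le n s (y s)

lemma inner_cont (n : ℕ) {y : ℝ → ℝ} (hy : Measurable y) :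
    Continuous (fun t => ∫ s in (0:ℝ)..t, GG n s (y s)) :=
  intervalIntegral.continuous_primitive (fun a b => GGi_int n hy a b) 0

lemma inner_nonneg (n : ℕ) (y : ℝ → ℝ) {t : ℝ} (ht : 0 ≤ t) :
    0 ≤ ∫ s in (0:ℝ)..t, GG n s (y s) :=
  intervalIntegral.integral_nonneg ht fun _ _ => GG_nonneg _ _ _

lemma inner_mono (n : ℕ) {x y : ℝ → ℝ} (hx : Measurable x) (hy : Measurable y)
    (h : ∀ s, 0 ≤ s → clp (x s) ≤ clp (y s)) {t : ℝ} (ht : 0 ≤ t) :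
    ∫ s in (0:ℝ)..t, GG n s (x s) ≤ ∫ s in (0:ℝ)..t, GG n s (y s) :=
  intervalIntegral.integral_mono_on ht (GGi_int n hx _ _) (GGi_int n hy _ _)
    fun s hs => GG_mono n s (h s hs.1)

lemma JJ_deriv (n : ℕ) {y : ℝ → ℝ} (hy : Measurable y) (z : ℝ) :
    HasDerivAt (JJ n y) (∫ s in (0:ℝ)..z, GG n s (y s)) z :=
  (inner_cont n hy).integral_hasStrictDerivAt 0 z |>.hasDerivAt

lemma JJ_cont (n : ℕ) {y : ℝ → ℝ} (hy : Measurable y) : Continuous (JJ n y) :=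
  continuous_iff_continuousAt.2 fun z => (JJ_deriv n hy z).continuousAt

lemma JJ_mono (n : ℕ) {x y : ℝ → ℝ} (hx : Measurable x) (hy : Measurable y)
    (h : ∀ s, 0 ≤ s → clp (x s) ≤ clp (y s)) {t : ℝ} (ht : 0 ≤ t) : JJ n x t ≤ JJ n y t :=
  intervalIntegral.integral_mono_on ht ((inner_cont n hx).intervalIntegrable _ _)
    ((inner_cont n hy).intervalIntegrable _ _) fun _ hs => inner_mono n hx hy h hs.1

lemma JJ_nonneg (n : ℕ) (y : ℝ → ℝ) {t : ℝ} (ht : 0 ≤ t) : 0 ≤ JJ n y t :=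
  intervalIntegral.integral_nonneg ht fun _ hs => inner_nonneg n y hs.1

noncomputable def YY (n : ℕ) (a : ℝ) : ℕ → ℝ → ℝ
  | 0 => fun z => a - kap * z
  | k + 1 => fun z => a - kap * z + JJ n (YY n a k) z

lemma YY_cont (n : ℕ) (a : ℝ) (k : ℕ) : Continuous (YY n a k) := by
  induction k with
  | zero => simp only [YY]; fun_prop
  | succ k ih =>
    simp only [YY]
    have := JJ_cont n ih.measurable
    fun_prop

lemma YY_step (n : ℕ) (a : ℝ) (k : ℕ) : ∀ z, 0 ≤ z → YY n a k z ≤ YY n a (k+1) z := by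
  induction k with
  | zero =>
    intro z hz
    simp only [YY]
    have := JJ_nonneg n (fun z => a - kap * z) hz
    linarith
  | succ k ih =>
    intro z hz
    have := JJ_mono n (YY_cont n a k).measurable (YY_cont n a (k+1)).measurable
      (fun s hs => clp_mono (ih s hs)) hz
    rw [YY, YY]
    linarith

lemma YY_bdd (n : ℕ) (a : ℝ) (k : ℕ) (z : ℝ) (hz : 0 ≤ z) :
    YY n a k z ≤ a - kap * z + JJ n (fun _ => 3) z := by
  cases k with
  | zero =>
    simp only [YY]
    have := JJ_nonneg n (fun _ => 3) hz
    linarith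
  | succ k =>
    have := JJ_mono n (YY_cont n a k).measurable (measurable_const (a := (3:ℝ)))
      (fun s hs => by rw [clp_three]; exact clp_le _) hz
    rw [YY]
    linarith

lemma exists_lim (n : ℕ) (a : ℝ) : ∃ y : ℝ → ℝ, Measurable y ∧
    ∀ z, 0 ≤ z → y z = a - kap * z + JJ n y z := by
  let y : ℝ → ℝ := fun z => ⨆ k, YY n a k (max z 0)
  have hlim' : ∀ z, Tendsto (fun k => YY n a k (max z 0)) atTop (𝓝 (y z)) := by
    intro z
    refine tendsto_atTop_ciSup (monotone_nat_of_le_succ fun k => YY_step n a k _ (le_max_right _ _)) ?_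
    refine ⟨a - kap * max z 0 + JJ n (fun _ => 3) (max z 0), ?_⟩
    rintro _ ⟨k, rfl⟩
    exact YY_bdd n a k _ (le_max_right _ _)
  have hym : Measurable y := by
    refine measurable_of_tendsto_metrizable (f := fun k z => YY n a k (max z 0)) ?_
      (tendsto_pi_nhds.2 hlim')
    intro k
    have := (YY_cont n a k)
    exact (this.comp (by fun_prop : Continuous fun z : ℝ => max z 0)).measurable
  have hlim : ∀ z, 0 ≤ z → Tendsto (fun k => YY n a k z) atTop (𝓝 (y z)) := by
    intro z hz
    simpa [max_eq_left hz] using hlim' z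
  refine ⟨y, hym, fun z hz => ?_⟩
  have h1 : ∀ t, 0 ≤ t → Tendsto (fun k => ∫ s in (0:ℝ)..t, GG n s (YY n a k s)) atTop
      (𝓝 (∫ s in (0:ℝ)..t, GG n s (y s))) := by
    intro t ht
    refine intervalIntegral.tendsto_integral_filter_of_dominated_convergence (fun s => GG n s 3)
      ?_ ?_ ((GG3_cont n).intervalIntegrable _ _) ?_
    · exact Eventually.of_forall fun k => (GGi_meas n (YY_cont n a k).measurable).aestronglyMeasurable
    · refine Eventually.of_forall fun k => Eventually.of_forall fun s _ => ?_
      rw [Real.norm_eq_abs, abs_of_nonneg (GG_nonneg _ _ _)]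
      exact GG_le _ _ _
    · refine Eventually.of_forall fun s hs => ?_
      rw [uIoc_of_le ht] at hs
      exact ((GG_cont n).tendsto (s, y s)).comp (tendsto_const_nhds.prodMk_nhds (hlim s hs.1.le))
  have h2 : Tendsto (fun k => JJ n (YY n a k) z) atTop (𝓝 (JJ n y z)) := by
    refine intervalIntegral.tendsto_integral_filter_of_dominated_convergence
      (fun t => ∫ s in (0:ℝ)..t, GG n s 3)
      ?_ ?_ ((inner_cont n (measurable_const (a := (3:ℝ)))).intervalIntegrable _ _) ?_
    · exact Eventually.of_forall fun k => (inner_cont n (YY_cont n a k).measurable).aestronglyMeasurable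
    · refine Eventually.of_forall fun k => Eventually.of_forall fun s hs => ?_
      rw [uIoc_of_le hz] at hs
      rw [Real.norm_eq_abs, abs_of_nonneg (inner_nonneg _ _ hs.1.le)]
      exact inner_mono n (YY_cont n a k).measurable (measurable_const (a := (3:ℝ)))
        (fun s hs => by rw [clp_three]; exact clp_le _) hs.1.le
    · refine Eventually.of_forall fun s hs => ?_
      rw [uIoc_of_le hz] at hs
      exact h1 s hs.1.le
  have h3 := (tendsto_add_atTop_iff_nat 1).2 (hlim z hz)
  exact tendsto_nhds_unique h3 (h2.const_add (a - kap * z))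

def IsSol (n : ℕ) (y v : ℝ → ℝ) : Prop :=
  v 0 = -kap ∧ ∀ z, 0 ≤ z → HasDerivAt y (v z) z ∧ HasDerivAt v (GG n z (y z)) z

lemma exists_sol (n : ℕ) (a : ℝ) : ∃ y v : ℝ → ℝ, y 0 = a ∧ IsSol n y v := by
  obtain ⟨y, hym, hy⟩ := exists_lim n a
  let Y : ℝ → ℝ := fun z => a - kap * z + JJ n y z
  have hYc : Continuous Y := by
    have := JJ_cont n hym
    fun_prop
  let v : ℝ → ℝ := fun t => -kap + ∫ s in (0:ℝ)..t, GG n s (Y s)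
  refine ⟨Y, v, by simp [Y, JJ], by simp [v], fun z hz => ⟨?_, ?_⟩⟩
  · have e : v z = -kap + ∫ s in (0:ℝ)..z, GG n s (y s) := by
      simp only [v]
      congr 1
      refine intervalIntegral.integral_congr fun s hs => ?_
      rw [uIcc_of_le hz] at hs
      simp only [Y]
      rw [← hy s hs.1]
    rw [e]
    have h1 := ((hasDerivAt_id z).const_mul kap).const_sub a
    have h2 := h1.add (JJ_deriv n hym z)
    simp only [id, mul_one] at h2
    exact h2
  · have hc : Continuous fun s => GG n s (Y s) :=
      (GG_cont n).comp (continuous_id.prodMk hYc)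
    exact (hc.integral_hasStrictDerivAt 0 z).hasDerivAt.const_add _

lemma field_lip (n : ℕ) (T : ℝ) (hT : 0 ≤ T) : ∃ K : NNReal, ∀ t ∈ Icc 0 T,
    LipschitzOnWith K (fun p : ℝ × ℝ => (p.2, GG n t p.1)) univ := by
  obtain ⟨K, hK⟩ := GG_lip n T hT
  refine ⟨max 1 K, fun t ht => ?_⟩
  refine LipschitzOnWith.of_dist_le_mul fun p _ q _ => ?_
  have h1 : dist p.1 q.1 ≤ dist p q := le_max_left _ _
  have h2 : dist p.2 q.2 ≤ dist p q := le_max_right _ _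
  have hm1 : (1:ℝ) ≤ ((max 1 K : NNReal) : ℝ) := by
    rw [NNReal.coe_max]; exact le_max_left _ _
  have hm2 : (K:ℝ) ≤ ((max 1 K : NNReal) : ℝ) := by
    rw [NNReal.coe_max]; exact le_max_right _ _
  have hd : 0 ≤ dist p q := dist_nonneg
  rw [Prod.dist_eq]
  refine max_le ?_ ?_
  · simp only
    nlinarith
  · simp only
    have := hK t ht p.1 q.1
    rw [← Real.dist_eq, ← Real.dist_eq] at this
    refine this.trans ?_
    gcongr

lemma IsSol.pair {n : ℕ} {y v : ℝ → ℝ} (h : IsSol n y v) (t : ℝ) (ht : 0 ≤ t) :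
    HasDerivAt (fun t => (y t, v t)) (v t, GG n t (y t)) t :=
  (h.2 t ht).1.prodMk (h.2 t ht).2

lemma IsSol.pair_cont {n : ℕ} {y v : ℝ → ℝ} (h : IsSol n y v) (T : ℝ) :
    ContinuousOn (fun t => (y t, v t)) (Icc 0 T) :=
  fun t ht => (h.pair t ht.1).continuousAt.continuousWithinAt

lemma cont_dep (n : ℕ) (T : ℝ) (hT : 0 ≤ T) : ∃ C : ℝ, 0 < C ∧ ∀ y v x w : ℝ → ℝ,
    IsSol n y v → IsSol n x w → |y T - x T| ≤ |y 0 - x 0| * C := by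
  obtain ⟨K, hK⟩ := field_lip n T hT
  refine ⟨Real.exp (K * (T - 0)), Real.exp_pos _, fun y v x w h1 h2 => ?_⟩
  have := dist_le_of_trajectories_ODE_of_mem (v := fun t (p : ℝ × ℝ) => (p.2, GG n t p.1))
    (s := fun _ => univ) (K := K) (a := 0) (b := T) (δ := |y 0 - x 0|)
    (fun t ht => hK t ⟨ht.1, ht.2.le⟩)
    (h1.pair_cont T) (fun t ht => (h1.pair t ht.1).hasDerivWithinAt) (fun _ _ => mem_univ _)
    (h2.pair_cont T) (fun t ht => (h2.pair t ht.1).hasDerivWithinAt) (fun _ _ => mem_univ _)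
    (by rw [Prod.dist_eq]; simp [h1.1, h2.1, Real.dist_eq]) T ⟨hT, le_rfl⟩
  refine le_trans ?_ this
  rw [← Real.dist_eq]
  exact le_max_left _ _

lemma no_touch {n : ℕ} (hn : 2 ≤ n) {y v : ℝ → ℝ} (h : IsSol n y v) {T : ℝ} (hT : 0 ≤ T)
    (hy : y T = 0) (hv : v T = 0) : False := by
  obtain ⟨K, hK⟩ := field_lip n T hT
  have := ODE_solution_unique_of_mem_Icc_left (v := fun t (p : ℝ × ℝ) => (p.2, GG n t p.1))
    (s := fun _ => univ) (K := K) (a := 0) (b := T) (f := fun t => (y t, v t))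
    (g := fun _ => ((0:ℝ), (0:ℝ)))
    (fun t ht => hK t ⟨ht.1.le, ht.2⟩)
    (h.pair_cont T) (fun t ht => (h.pair t ht.1.le).hasDerivWithinAt) (fun _ _ => mem_univ _)
    continuousOn_const (fun t ht => by
      rw [GG_zero hn t le_rfl]
      exact hasDerivWithinAt_const _ _ _) (fun _ _ => mem_univ _)
    (by simp [hy, hv])
  have h0 := this (left_mem_Icc.2 hT)
  have h1 : v 0 = 0 := congrArg Prod.snd h0
  have := kap_pos
  have := h.1
  linarith

lemma IsSol.vmono {n : ℕ} {y v : ℝ → ℝ} (h : IsSol n y v) : MonotoneOn v (Ici 0) := by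
  refine monotoneOn_of_deriv_nonneg (convex_Ici 0)
    (fun t ht => (h.2 t ht).2.continuousAt.continuousWithinAt) ?_ ?_
  · intro t ht
    rw [interior_Ici] at ht
    exact (h.2 t (le_of_lt ht)).2.differentiableAt.differentiableWithinAt
  · intro t ht
    rw [interior_Ici] at ht
    rw [(h.2 t (le_of_lt ht)).2.deriv]
    exact GG_nonneg _ _ _

lemma IsSol.ycont {n : ℕ} {y v : ℝ → ℝ} (h : IsSol n y v) : ContinuousOn y (Ici 0) :=
  fun t ht => (h.2 t ht).1.continuousAt.continuousWithinAt

lemma IsSol.convex {n : ℕ} {y v : ℝ → ℝ} (h : IsSol n y v) : ConvexOn ℝ (Ici 0) y := by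
  refine MonotoneOn.convexOn_of_deriv (convex_Ici 0) h.ycont ?_ ?_
  · intro t ht
    rw [interior_Ici] at ht
    exact (h.2 t (le_of_lt ht)).1.differentiableAt.differentiableWithinAt
  · rw [interior_Ici]
    intro s hs t ht hst
    rw [(h.2 t (le_of_lt ht)).1.deriv, (h.2 s (le_of_lt hs)).1.deriv]
    exact h.vmono (mem_Ici.2 (le_of_lt hs)) (mem_Ici.2 (le_of_lt ht)) hst

lemma disj {n : ℕ} (hn : 2 ≤ n) {y v : ℝ → ℝ} (h : IsSol n y v) (ha : 0 ≤ y 0)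
    {z0 z1 : ℝ} (h0 : 0 ≤ z0) (h1 : 0 ≤ z1) (hy0 : y z0 < 0) (hy1 : y 0 < y z1) : False := by
  have hlt : z0 < z1 := by
    by_contra hc
    push Not at hc
    have := h.convex.le_max_of_mem_Icc (x := 0) (y := z0) (z := z1) (mem_Ici.2 le_rfl) h0 ⟨h1, hc⟩
    rw [max_eq_left (by linarith)] at this
    linarith
  obtain ⟨b, hb, hyb⟩ := intermediate_value_Icc' h0
    (h.ycont.mono Icc_subset_Ici_self) (show (0:ℝ) ∈ Icc (y z0) (y 0) from ⟨hy0.le, ha⟩)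
  obtain ⟨c, hc, hyc⟩ := intermediate_value_Icc hlt.le
    (h.ycont.mono (fun t ht => h0.trans ht.1)) (show (0:ℝ) ∈ Icc (y z0) (y z1) from
      ⟨hy0.le, by linarith⟩)
  have hb0 : 0 ≤ b := hb.1
  have hneg : ∀ x ∈ Icc b c, y x ≤ 0 := by
    intro x hx
    have := h.convex.le_max_of_mem_Icc (x := b) (y := c) (z := x) hb0 (h0.trans hc.1) hx
    rw [hyb, hyc] at this
    simpa using this
  have hva : AntitoneOn v (Icc b c) := by
    refine antitoneOn_of_deriv_nonpos (convex_Icc b c)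
      (fun t ht => (h.2 t (hb0.trans ht.1)).2.continuousAt.continuousWithinAt) ?_ ?_
    · intro t ht
      have ht := interior_subset ht
      exact (h.2 t (hb0.trans ht.1)).2.differentiableAt.differentiableWithinAt
    · intro t ht
      have ht := interior_subset ht
      rw [(h.2 t (hb0.trans ht.1)).2.deriv, GG_zero hn t (hneg t ht)]
  have hcc : ConcaveOn ℝ (Icc b c) y := by
    refine AntitoneOn.concaveOn_of_deriv (convex_Icc b c)
      (h.ycont.mono fun t ht => hb0.trans ht.1) ?_ ?_
    · intro t ht
      have ht := interior_subset ht
      exact (h.2 t (hb0.trans ht.1)).1.differentiableAt.differentiableWithinAt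
    · intro s hs t ht hst
      have hs := interior_subset hs
      have ht := interior_subset ht
      rw [(h.2 t (hb0.trans ht.1)).1.deriv, (h.2 s (hb0.trans hs.1)).1.deriv]
      exact hva hs ht hst
  have hbc : b ≤ c := hb.2.trans hc.1
  have := hcc.min_le_of_mem_Icc (x := b) (y := c) (z := z0) (left_mem_Icc.2 hbc)
    (right_mem_Icc.2 hbc) ⟨hb.2, hc.1⟩
  rw [hyb, hyc] at this
  simp at this
  linarith

/-- Lower bound of `y` by integrating a lower bound of `v`. -/
lemma low1 {f g : ℝ → ℝ} {c a b : ℝ} (hab : a ≤ b) (h : ∀ t ∈ Icc a b, HasDerivAt f (g t) t)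
    (hg : ∀ t ∈ Icc a b, c ≤ g t) : f a + c * (b - a) ≤ f b := by
  have := Convex.mul_sub_le_image_sub_of_le_deriv (convex_Icc a b)
    (fun t ht => (h t ht).continuousAt.continuousWithinAt)
    (fun t ht => (h t (interior_subset ht)).differentiableAt.differentiableWithinAt)
    (C := c) (fun t ht => by
      rw [(h t (interior_subset ht)).deriv]; exact hg t (interior_subset ht)) a
      (left_mem_Icc.2 hab) b (right_mem_Icc.2 hab) hab
  linarith

lemma start_zero {n : ℕ} {y v : ℝ → ℝ} (h : IsSol n y v) (ha : y 0 = 0) :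
    ∃ z, 0 ≤ z ∧ y z < 0 := by
  by_contra hc
  push Not at hc
  have hd := (h.2 0 le_rfl).1
  rw [h.1] at hd
  have hk := kap_pos
  have h1 := hd.hasDerivWithinAt (s := Ici 0)
  have h3 : (0:ℝ) ≤ -kap := by
    have : Ici (0:ℝ) \ {0} = Ioi 0 := by simp
    rw [hasDerivWithinAt_iff_tendsto_slope, this] at h1
    refine ge_of_tendsto h1 ?_
    filter_upwards [self_mem_nhdsWithin] with t ht
    have ht : 0 < t := ht
    rw [slope_def_field, ha]
    have := hc t ht.le
    simp only [sub_zero]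
    positivity
  linarith

lemma start_three {n : ℕ} (hn : 2 ≤ n) {y v : ℝ → ℝ} (h : IsSol n y v) (ha : y 0 = 3) :
    ∃ z, 0 ≤ z ∧ 3 < y z := by
  have hk := kap_le
  have hv : ∀ t, 0 ≤ t → -1 ≤ v t := fun t ht => by
    have := h.vmono (mem_Ici.2 le_rfl) ht ht
    rw [h.1] at this
    linarith
  have hy : ∀ t ∈ Icc (0:ℝ) 1, 2 ≤ y t := fun t ht => by
    have := low1 (f := y) (g := v) ht.1 (fun s hs => (h.2 s hs.1).1) (fun s hs => hv s hs.1)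
    have := ht.2
    linarith
  have hG : ∀ t ∈ Icc (0:ℝ) 1, 16 ≤ GG n t (y t) := fun t ht => by
    refine le_trans ?_ (GG_lower n t (c := 2) (by norm_num) ?_)
    · calc (16:ℝ) = (2^2)^2 := by norm_num
        _ ≤ _ := pow_le_pow_right₀ (by norm_num) hn
    · have := clp_mono (hy t ht)
      rwa [clp_eq (by norm_num) (by norm_num)] at this
  have hv2 : ∀ t ∈ Icc (0:ℝ) 1, -1 + 16 * t ≤ v t := fun t ht => by
    have := low1 (f := v) (g := fun t => GG n t (y t)) ht.1 (fun s hs => (h.2 s hs.1).2)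
      (fun s hs => hG s ⟨hs.1, hs.2.trans ht.2⟩)
    have := h.1
    linarith
  refine ⟨1, by norm_num, ?_⟩
  have e1 := low1 (f := y) (g := v) (c := -1) (a := 0) (b := 1/2) (by norm_num)
    (fun s hs => (h.2 s hs.1).1) (fun s hs => hv s hs.1)
  have e2 := low1 (f := y) (g := v) (c := 7) (a := 1/2) (b := 1) (by norm_num)
    (fun s hs => (h.2 s (by linarith [hs.1])).1)
    (fun s hs => by
      have := hv2 s ⟨by linarith [hs.1], hs.2⟩
      linarith [hs.1])
  linarith

lemma shoot {n : ℕ} (hn : 2 ≤ n) : ∃ y v : ℝ → ℝ, IsSol n y v ∧ ∀ z, 0 ≤ z → 0 ≤ y z ∧ y z ≤ 3 := by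
  choose Y V hY0 hS using exists_sol n
  have hcont : ∀ T, 0 ≤ T → Continuous fun a => Y a T := by
    intro T hT
    obtain ⟨C, hC, h⟩ := cont_dep n T hT
    refine (LipschitzWith.of_dist_le_mul (K := ⟨C, hC.le⟩) fun a b => ?_).continuous
    have := h _ _ _ _ (hS a) (hS b)
    rw [hY0, hY0] at this
    rw [Real.dist_eq, Real.dist_eq, mul_comm]
    exact this
  by_contra hcon
  push Not at hcon
  let A : Set ℝ := ⋃ z : Ici (0:ℝ), {a | Y a z < 0}
  let B : Set ℝ := ⋃ z : Ici (0:ℝ), {a | a < Y a z}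
  have hA : IsOpen A := isOpen_iUnion fun z => isOpen_lt (hcont z z.2) continuous_const
  have hB : IsOpen B := isOpen_iUnion fun z => isOpen_lt continuous_id (hcont z z.2)
  have hp := isPreconnected_Icc (a := (0:ℝ)) (b := 3) A B hA hB ?_ ?_ ?_
  · obtain ⟨a, ha, haA, haB⟩ := hp
    simp only [A, B, mem_iUnion, mem_ofPred_eq] at haA haB
    obtain ⟨⟨z0, h0⟩, hz0⟩ := haA
    obtain ⟨⟨z1, h1⟩, hz1⟩ := haB
    exact disj hn (hS a) (by rw [hY0]; exact ha.1) h0 h1 hz0 (by rw [hY0]; exact hz1)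
  · intro a ha
    obtain ⟨z, hz, h⟩ := hcon _ _ (hS a)
    by_cases h0 : 0 ≤ Y a z
    · right
      exact mem_iUnion.2 ⟨⟨z, hz⟩, lt_of_le_of_lt ha.2 (h h0)⟩
    · left
      exact mem_iUnion.2 ⟨⟨z, hz⟩, not_le.1 h0⟩
  · obtain ⟨z, hz, h⟩ := start_zero (hS 0) (hY0 0)
    exact ⟨0, by simp, mem_iUnion.2 ⟨⟨z, hz⟩, h⟩⟩
  · obtain ⟨z, hz, h⟩ := start_three hn (hS 3) (hY0 3)
    exact ⟨3, by simp, mem_iUnion.2 ⟨⟨z, hz⟩, h⟩⟩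

lemma exists_profile {n : ℕ} (hn : 2 ≤ n) : ∃ η : ℝ → ℝ, IsReactiveProfile n η := by
  obtain ⟨y, v, h, hb⟩ := shoot hn
  have hvneg : ∀ z, 0 ≤ z → v z ≤ 0 := by
    intro z hz
    by_contra hc
    push Not at hc
    have hq : 0 ≤ 4 / v z := by positivity
    have := low1 (f := y) (g := v) (c := v z) (a := z) (b := z + 4 / v z) (by linarith)
      (fun s hs => (h.2 s (hz.trans hs.1)).1) (fun s hs => h.vmono hz (hz.trans hs.1) hs.1)
    have e : v z * (z + 4 / v z - z) = 4 := by field_simp; ring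
    rw [e] at this
    have := (hb z hz).1
    have := (hb (z + 4 / v z) (by linarith)).2
    linarith
  have hanti : ∀ a b, 0 ≤ a → a ≤ b → y b ≤ y a := by
    intro a b ha hab
    have := low1 (f := fun t => - y t) (g := fun t => - v t) (c := 0) hab
      (fun s hs => (h.2 s (ha.trans hs.1)).1.neg)
      (fun s hs => by have := hvneg s (ha.trans hs.1); linarith)
    linarith
  have hpos : ∀ z, 0 ≤ z → 0 < y z := by
    intro z hz
    rcases (hb z hz).1.lt_or_eq with h1 | h1
    · exact h1
    exfalso
    rcases hz.lt_or_eq with hz0 | hz0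
    · have hm : IsLocalMin y z := by
        filter_upwards [Ioi_mem_nhds hz0] with t ht
        rw [← h1]
        exact (hb t (le_of_lt ht)).1
      exact no_touch hn h hz h1.symm (hm.hasDerivAt_eq_zero (h.2 z hz).1)
    · rw [← hz0] at h1
      obtain ⟨z', hz', h'⟩ := start_zero h h1.symm
      linarith [(hb z' hz').1]
  have hGe : ∀ z, 0 ≤ z → GG n z (y z) = (2 * kap * z * y z + (y z) ^ 2) ^ n := by
    intro z hz
    unfold GG
    rw [clp_eq (hb z hz).1 (hb z hz).2, max_eq_left hz]
  have hu : UniqueDiffOn ℝ (Ici (0:ℝ)) := uniqueDiffOn_Ici 0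
  have hd1 : ∀ z ∈ Ici (0:ℝ), derivWithin y (Ici 0) z = v z := fun z hz =>
    (h.2 z hz).1.hasDerivWithinAt.derivWithin (hu z hz)
  have hd2 : ∀ z ∈ Ici (0:ℝ), derivWithin v (Ici 0) z = GG n z (y z) := fun z hz =>
    (h.2 z hz).2.hasDerivWithinAt.derivWithin (hu z hz)
  have hGc : ContinuousOn (fun z => GG n z (y z)) (Ici 0) :=
    (GG_cont n).comp_continuousOn (continuousOn_id.prodMk h.ycont)
  have hv1 : ContDiffOn ℝ 1 v (Ici 0) := by
    rw [contDiffOn_one_iff_derivWithin hu]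
    exact ⟨fun z hz => (h.2 z hz).2.differentiableAt.differentiableWithinAt, hGc.congr hd2⟩
  refine ⟨y, ?_, hpos, ?_, ?_, ?_⟩
  · rw [show (2 : WithTop ℕ∞) = 1 + 1 by norm_num, contDiffOn_succ_iff_derivWithin hu]
    exact ⟨fun z hz => (h.2 z hz).1.differentiableAt.differentiableWithinAt, by simp,
      hv1.congr hd1⟩
  · intro z hz
    rw [derivWithin_congr hd1 (hd1 z hz), hd2 z hz, hGe z hz]
  · rw [hd1 0 (mem_Ici.2 le_rfl), h.1]
  · rw [Metric.tendsto_atTop]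
    intro ε hε
    have : ∃ z, 0 ≤ z ∧ y z < ε := by
      by_contra hc
      push Not at hc
      set e := min ε 3 with he
      have he0 : 0 < e := lt_min hε (by norm_num)
      set c := (e ^ 2) ^ n with hcd
      have hc0 : 0 < c := by positivity
      have hk := kap_pos
      have hq : 0 ≤ 2 * kap / c := by positivity
      have := low1 (f := v) (g := fun t => GG n t (y t)) (c := c) (a := 0) (b := 2 * kap / c) hq
        (fun s hs => (h.2 s hs.1).2) (fun s hs => by
          refine GG_lower n s he0.le ?_
          rw [clp_eq (hb s hs.1).1 (hb s hs.1).2]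
          exact (min_le_left _ _).trans (hc s hs.1))
      have e : c * (2 * kap / c - 0) = 2 * kap := by field_simp; ring
      rw [e, h.1] at this
      have := hvneg _ hq
      linarith
    obtain ⟨z, hz, hlt⟩ := this
    refine ⟨z, fun t ht => ?_⟩
    rw [Real.dist_eq, sub_zero, abs_of_pos (hpos t (hz.trans ht))]
    exact (hanti z t hz ht).trans_lt hlt

lemma unique_profile {n : ℕ} {x y : ℝ → ℝ} (hx : IsReactiveProfile n x)
    (hy : IsReactiveProfile n y) : EqOn x y (Ici 0) := by
  have hu : UniqueDiffOn ℝ (Ici (0:ℝ)) := uniqueDiffOn_Ici 0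
  have key : ∀ f, IsReactiveProfile n f → ∀ z ∈ Ici (0:ℝ),
      HasDerivWithinAt f (derivWithin f (Ici 0) z) (Ici 0) z ∧
      HasDerivWithinAt (derivWithin f (Ici 0)) ((2 * kap * z * f z + (f z) ^ 2) ^ n) (Ici 0) z := by
    intro f hf z hz
    have h2 := hf.1
    rw [show (2 : WithTop ℕ∞) = 1 + 1 by norm_num, contDiffOn_succ_iff_derivWithin hu] at h2
    refine ⟨(h2.1 z hz).hasDerivWithinAt, ?_⟩
    have := ((h2.2.2.differentiableOn (by norm_num)) z hz).hasDerivWithinAt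
    rwa [hf.2.2.1 z hz] at this
  set x' := derivWithin x (Ici 0) with hx'
  set y' := derivWithin y (Ici 0) with hy'
  have hk := kap_pos
  have hq : ∀ z ∈ Ici (0:ℝ), HasDerivWithinAt (fun z => (x z - y z) * (x' z - y' z))
      ((x' z - y' z) * (x' z - y' z) + (x z - y z) *
        ((2 * kap * z * x z + (x z) ^ 2) ^ n - (2 * kap * z * y z + (y z) ^ 2) ^ n)) (Ici 0) z := by
    intro z hz
    have a := key x hx z hz
    have b := key y hy z hz
    exact (a.1.sub b.1).mul (a.2.sub b.2)
  have hmon : ∀ z, 0 ≤ z → ∀ a b, 0 ≤ a → a ≤ b →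
      (2 * kap * z * a + a ^ 2) ^ n ≤ (2 * kap * z * b + b ^ 2) ^ n := by
    intro z hz a b ha hab
    gcongr
  have hqm : MonotoneOn (fun z => (x z - y z) * (x' z - y' z)) (Ici 0) := by
    refine monotoneOn_of_hasDerivWithinAt_nonneg (convex_Ici 0)
      (fun z hz => (hq z hz).continuousWithinAt)
      (fun z hz => (hq z (interior_subset hz)).mono interior_subset) ?_
    intro z hz
    have hz := interior_subset hz
    have hxp := hx.2.1 z hz
    have hyp := hy.2.1 z hz
    refine add_nonneg (mul_self_nonneg _) ?_
    rcases le_total (x z) (y z) with h | h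
    · have := hmon z hz _ _ hxp.le h
      exact mul_nonneg_of_nonpos_of_nonpos (by linarith) (by linarith)
    · have := hmon z hz _ _ hyp.le h
      exact mul_nonneg (by linarith) (by linarith)
  have hq0 : ∀ z ∈ Ici (0:ℝ), 0 ≤ (x z - y z) * (x' z - y' z) := by
    intro z hz
    have := hqm (mem_Ici.2 le_rfl) hz hz
    simp only at this
    rw [hx', hy', hx.2.2.2.1, hy.2.2.2.1, sub_self, mul_zero] at this
    exact this
  have hw : ∀ z ∈ Ici (0:ℝ), HasDerivWithinAt (fun z => (x z - y z) * (x z - y z))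
      ((x' z - y' z) * (x z - y z) + (x z - y z) * (x' z - y' z)) (Ici 0) z := by
    intro z hz
    have a := key x hx z hz
    have b := key y hy z hz
    exact (a.1.sub b.1).mul (a.1.sub b.1)
  have hwm : MonotoneOn (fun z => (x z - y z) * (x z - y z)) (Ici 0) := by
    refine monotoneOn_of_hasDerivWithinAt_nonneg (convex_Ici 0)
      (fun z hz => (hw z hz).continuousWithinAt)
      (fun z hz => (hw z (interior_subset hz)).mono interior_subset) ?_
    intro z hz
    have := hq0 z (interior_subset hz)
    linarith
  have hlim : Tendsto (fun z => (x z - y z) * (x z - y z)) atTop (𝓝 0) := by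
    have := (hx.2.2.2.2.sub hy.2.2.2.2)
    simpa using this.mul this
  intro z hz
  have : (x z - y z) * (x z - y z) ≤ 0 := by
    refine ge_of_tendsto hlim ?_
    filter_upwards [eventually_ge_atTop z] with t ht
    exact hwm hz (mem_Ici.2 (le_trans hz ht)) ht
  have := mul_self_eq_zero.1 (le_antisymm this (mul_self_nonneg _))
  linarith

/-- For every integer n ≥ 2 there exists a unique positive twice continuously
differentiable function η on [0,∞) with η'' = (2κzη+η²)ⁿ, η'(0) = −κ, η(z) → 0 as z → ∞. -/
theorem reactive_profile_exists_unique (n : ℕ) (hn : 2 ≤ n) :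
    (∃ η : ℝ → ℝ, IsReactiveProfile n η) ∧
    (∀ η₁ η₂ : ℝ → ℝ, IsReactiveProfile n η₁ → IsReactiveProfile n η₂ →
      Set.EqOn η₁ η₂ (Set.Ici 0)) := by
  exact ⟨exists_profile hn, fun _ _ h1 h2 => unique_profile h1 h2⟩
end

section
/- Let n ≥ 2 be an integer and let η be the admissible reactive profile. Writing η₀ = η(0), one has η₀ > 0, η'(0) = −κ, η''(0) = η₀^{2n}, η'''(0) = 0, and η''''(0) = −2n η₀^{2n−2}(κ² − η₀^{2n+1}); moreover the coefficients η₂ = η₀^{2n}/2 and η₄ = (n/12) η₀^{2n−2}(κ² − η₀^{2n+1}) are strictly positive (in particular κ² > η₀^{2n+1}). -/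
open Set Filter

lemma rp_mono {f f' : ℝ → ℝ} (h : ∀ z ∈ Ici (0:ℝ), HasDerivWithinAt f (f' z) (Ici 0) z)
    {a b : ℝ} (ha : 0 ≤ a) (hab : a ≤ b) (hp : ∀ z ∈ Icc a b, 0 ≤ f' z) : f a ≤ f b := by
  have hm : MonotoneOn f (Icc a b) := by
    apply monotoneOn_of_hasDerivWithinAt_nonneg (f' := f') (convex_Icc a b)
    · intro z hz
      exact ((h z (ha.trans hz.1)).continuousWithinAt).mono (fun y hy => ha.trans hy.1)
    · intro z hz
      have hz' := interior_subset hz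
      exact (h z (ha.trans hz'.1)).mono (fun y hy => ha.trans (interior_subset hy).1)
    · intro z hz
      exact hp z (interior_subset hz)
  exact hm (left_mem_Icc.2 hab) (right_mem_Icc.2 hab) hab

lemma rp_step {g q r : ℝ → ℝ} (hg : ∀ z ∈ Ici (0:ℝ), HasDerivWithinAt g (q z) (Ici 0) z)
    (hq : ∀ z ∈ Ici (0:ℝ), HasDerivWithinAt q (r z) (Ici 0) z)
    {a d K : ℝ} (ha : 0 ≤ a) (hd : 0 < d) (hK : 0 ≤ K) (hKd : K * d ^ 2 < 1)
    (h1 : ∀ z ∈ Icc a (a + d), 0 ≤ g z → 0 ≤ r z)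
    (h2 : ∀ z ∈ Icc a (a + d), g z ≤ 0 → K * g z ≤ r z)
    (hga : 0 ≤ g a) (hqa : 0 ≤ q a) : ∀ z ∈ Icc a (a + d), 0 ≤ g z ∧ 0 ≤ q z := by
  have hcont : ContinuousOn g (Icc a (a + d)) := fun z hz =>
    ((hg z (ha.trans hz.1)).continuousWithinAt).mono (fun y hy => ha.trans hy.1)
  obtain ⟨c, hc, hmin⟩ := isCompact_Icc.exists_isMinOn ⟨a, left_mem_Icc.2 (by linarith)⟩ hcont
  have hgpos : 0 ≤ g c := by
    by_contra! hneg
    have hr : ∀ z ∈ Icc a (a + d), K * g c ≤ r z := by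
      intro z hz
      have hmz : g c ≤ g z := hmin hz
      rcases le_total 0 (g z) with h | h
      · exact le_trans (mul_nonpos_of_nonneg_of_nonpos hK hneg.le) (h1 z hz h)
      · exact le_trans (mul_le_mul_of_nonneg_left hmz hK) (h2 z hz h)
    have hq2 : ∀ z ∈ Icc a (a + d), K * g c * d ≤ q z := by
      intro z hz
      have := rp_mono (f := fun z => q z - K * g c * z) (f' := fun z => r z - K * g c)
        (fun z hz => by
          exact ((hq z hz).sub ((hasDerivWithinAt_id z _).const_mul (K * g c))).congr_deriv (by simp))
        ha hz.1 (fun y hy => sub_nonneg.2 (hr y ⟨hy.1, hy.2.trans hz.2⟩))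
      beta_reduce at this
      have h3 : K * g c ≤ 0 := mul_nonpos_of_nonneg_of_nonpos hK hneg.le
      nlinarith [hz.1, hz.2, mul_nonneg_of_nonpos_of_nonpos h3 (by linarith [hz.2] : z - a - d ≤ 0)]
    have := rp_mono (f := fun z => g z - K * g c * d * z) (f' := fun z => q z - K * g c * d)
        (fun z hz => by
          exact ((hg z hz).sub ((hasDerivWithinAt_id z _).const_mul (K * g c * d))).congr_deriv (by simp))
        ha hc.1 (fun y hy => sub_nonneg.2 (hq2 y ⟨hy.1, hy.2.trans hc.2⟩))
    beta_reduce at this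
    have h3 : K * g c * d ≤ 0 := mul_nonpos_of_nonpos_of_nonneg
      (mul_nonpos_of_nonneg_of_nonpos hK hneg.le) hd.le
    have h4 := mul_nonneg_of_nonpos_of_nonpos h3 (by linarith [hc.2] : c - a - d ≤ 0)
    nlinarith [mul_pos_of_neg_of_neg hneg (by linarith : K * d ^ 2 - 1 < 0)]
  have hg0 : ∀ z ∈ Icc a (a + d), 0 ≤ g z := fun z hz => hgpos.trans (hmin hz)
  intro z hz
  exact ⟨hg0 z hz, hqa.trans (rp_mono hq ha hz.1
    (fun y hy => h1 y ⟨hy.1, hy.2.trans hz.2⟩ (hg0 y ⟨hy.1, hy.2.trans hz.2⟩)))⟩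

lemma rp_global {g q r c : ℝ → ℝ} (hg : ∀ z ∈ Ici (0:ℝ), HasDerivWithinAt g (q z) (Ici 0) z)
    (hq : ∀ z ∈ Ici (0:ℝ), HasDerivWithinAt q (r z) (Ici 0) z)
    (hc0 : ∀ z ∈ Ici (0:ℝ), 0 ≤ c z) (hcm : MonotoneOn c (Ici 0))
    (hr : ∀ z ∈ Ici (0:ℝ), c z * g z ≤ r z)
    (hg0 : 0 ≤ g 0) (hq0 : 0 ≤ q 0) : ∀ z ∈ Ici (0:ℝ), 0 ≤ g z := by
  intro B hB
  have hB : 0 ≤ B := hB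
  set K := c (B + 1) with hKdef
  have hK : 0 ≤ K := hc0 _ (by simp only [mem_Ici]; linarith)
  set d := 1 / (K + 2) with hd
  have hdpos : 0 < d := by positivity
  have hd1 : d ≤ 1 := by rw [hd, div_le_one (by linarith)]; linarith
  have hKd : K * d ^ 2 < 1 := by
    rw [hd, div_pow, one_pow, mul_one_div, div_lt_one (by positivity)]; nlinarith
  have key : ∀ k : ℕ, ∀ z ∈ Icc 0 (B : ℝ), z ≤ k * d → 0 ≤ g z ∧ 0 ≤ q z := by
    intro k
    induction k with
    | zero =>
      intro z hz hk
      have : z = 0 := le_antisymm (by simpa using hk) hz.1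
      subst this
      exact ⟨hg0, hq0⟩
    | succ k ih =>
      intro z hz hk
      push_cast at hk
      rcases le_total z (k * d) with h | h
      · exact ih z hz h
      have hkd : 0 ≤ k * d := by positivity
      obtain ⟨ha1, ha2⟩ := ih (k * d) ⟨hkd, h.trans hz.2⟩ le_rfl
      refine rp_step hg hq hkd hdpos hK hKd ?_ ?_ ha1 ha2 z ⟨h, by linarith⟩
      · intro y hy hgy
        have hy0 : y ∈ Ici (0:ℝ) := hkd.trans hy.1
        exact (mul_nonneg (hc0 y hy0) hgy).trans (hr y hy0)
      · intro y hy hgy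
        have hy0 : y ∈ Ici (0:ℝ) := hkd.trans hy.1
        refine le_trans ?_ (hr y hy0)
        apply mul_le_mul_of_nonpos_right _ hgy
        exact hcm hy0 (by simp only [mem_Ici]; linarith) (by linarith [hy.2, hz.2])
  obtain ⟨k, hk⟩ := exists_nat_ge (B / d)
  exact (key k B ⟨hB, le_rfl⟩ ((div_le_iff₀ hdpos).1 hk)).1

/-- Taylor data of the reactive profile at the origin: with η₀ = η(0) one has η₀ > 0,
η'(0) = −κ, η''(0) = η₀^{2n}, η'''(0) = 0, η''''(0) = −2n η₀^{2n−2}(κ² − η₀^{2n+1}),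
and the coefficients η₂ = η₀^{2n}/2, η₄ = (n/12) η₀^{2n−2}(κ² − η₀^{2n+1}) are
strictly positive (in particular κ² > η₀^{2n+1}). -/
theorem reactive_profile_taylor_at_zero (n : ℕ) (hn : 2 ≤ n)
    (η : ℝ → ℝ) (hη : IsReactiveProfile n η) :
    0 < η 0 ∧
    derivWithin η (Set.Ici 0) 0 = -kap ∧
    derivWithin (derivWithin η (Set.Ici 0)) (Set.Ici 0) 0 = η 0 ^ (2 * n) ∧
    derivWithin (derivWithin (derivWithin η (Set.Ici 0)) (Set.Ici 0)) (Set.Ici 0) 0 = 0 ∧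
    derivWithin (derivWithin (derivWithin (derivWithin η (Set.Ici 0)) (Set.Ici 0))
        (Set.Ici 0)) (Set.Ici 0) 0
      = -(2 * (n : ℝ)) * η 0 ^ (2 * n - 2) * (kap ^ 2 - η 0 ^ (2 * n + 1)) ∧
    0 < η 0 ^ (2 * n) / 2 ∧
    0 < ((n : ℝ) / 12) * η 0 ^ (2 * n - 2) * (kap ^ 2 - η 0 ^ (2 * n + 1)) ∧
    η 0 ^ (2 * n + 1) < kap ^ 2 := by
  obtain ⟨hC, hpos, hode, h0, hlim⟩ := hη
  have hkap : 0 < kap := by unfold kap; positivity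
  have hu : UniqueDiffOn ℝ (Ici (0:ℝ)) := uniqueDiffOn_Ici 0
  set p := derivWithin η (Ici 0) with hp
  have hη1 : ∀ z ∈ Ici (0:ℝ), HasDerivWithinAt η (p z) (Ici 0) z := fun z hz =>
    ((hC.differentiableOn (by norm_num)) z hz).hasDerivWithinAt
  have hpC : ContDiffOn ℝ 1 p (Ici 0) := hC.derivWithin hu (by norm_num)
  set u : ℝ → ℝ := fun z => 2 * kap * z * η z + (η z) ^ 2 with hudef
  set v : ℝ → ℝ := fun z => 2 * kap * η z + 2 * kap * z * p z + 2 * η z * p z with hvdef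
  have hp1 : ∀ z ∈ Ici (0:ℝ), HasDerivWithinAt p (u z ^ n) (Ici 0) z := fun z hz => by
    have := ((hpC.differentiableOn (by norm_num)) z hz).hasDerivWithinAt
    rwa [hode z hz] at this
  have hu1 : ∀ z ∈ Ici (0:ℝ), HasDerivWithinAt u (v z) (Ici 0) z := fun z hz => by
    have := (((hasDerivWithinAt_id z (Ici 0)).const_mul (2 * kap)).mul (hη1 z hz)).add
      ((hη1 z hz).pow 2)
    refine (this.congr_deriv ?_)
    simp [hvdef]
  have hv1 : ∀ z ∈ Ici (0:ℝ), HasDerivWithinAt v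
      (4 * kap * p z + 2 * kap * z * u z ^ n + 2 * p z ^ 2 + 2 * η z * u z ^ n) (Ici 0) z :=
    fun z hz => by
    have := (((hη1 z hz).const_mul (2 * kap)).add
      (((hasDerivWithinAt_id z (Ici 0)).const_mul (2 * kap)).mul (hp1 z hz))).add
      (((hη1 z hz).const_mul 2).mul (hp1 z hz))
    refine (this.congr_deriv ?_)
    simp
    ring
  have z0 : (0:ℝ) ∈ Ici (0:ℝ) := by simp
  have hη0 : 0 < η 0 := hpos 0 z0
  have hu0 : u 0 = η 0 ^ 2 := by simp [hudef]
  have hv0 : v 0 = 0 := by simp [hvdef, h0]; ring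
  have hd2 : ∀ z ∈ Ici (0:ℝ), derivWithin p (Ici 0) z = u z ^ n := hode
  have hd3 : ∀ z ∈ Ici (0:ℝ), derivWithin (derivWithin p (Ici 0)) (Ici 0) z
      = n * u z ^ (n - 1) * v z := fun z hz => by
    rw [derivWithin_congr hd2 (hd2 z hz)]
    exact ((hu1 z hz).pow n).derivWithin (hu z hz)
  have hd4 : derivWithin (derivWithin (derivWithin p (Ici 0)) (Ici 0)) (Ici 0) 0
      = -(2 * (n : ℝ)) * η 0 ^ (2 * n - 2) * (kap ^ 2 - η 0 ^ (2 * n + 1)) := by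
    rw [derivWithin_congr hd3 (hd3 0 z0)]
    have := ((((hu1 0 z0).pow (n - 1)).const_mul (n : ℝ)).mul (hv1 0 z0)).derivWithin (hu 0 z0)
    refine Eq.trans this ?_
    have e : 2 * n - 2 = 2 * (n - 1) := by omega
    simp only [Pi.pow_apply, hv0, hu0, h0, e, pow_mul, pow_succ (η 0) (2 * n)]
    ring
  have hupos : ∀ z ∈ Ici (0:ℝ), 0 < u z := fun z hz => by
    have h1 := hpos z hz
    have h2 : 0 ≤ z := hz
    simp only [hudef]; positivity
  have main : η 0 ^ (2 * n + 1) < kap ^ 2 := by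
    by_contra! hcon
    have hpk : ∀ z ∈ Ici (0:ℝ), 0 ≤ p z + kap := fun z hz => by
      have := rp_mono hp1 le_rfl hz (fun y hy => (pow_pos (hupos y hy.1) n).le)
      linarith
    have hw1 : ∀ z ∈ Ici (0:ℝ), HasDerivWithinAt (fun z => η z + kap * z) (p z + kap) (Ici 0) z :=
      fun z hz => by
      exact ((hη1 z hz).add ((hasDerivWithinAt_id z (Ici 0)).const_mul kap)).congr_deriv (by simp)
    have hwm : MonotoneOn (fun z => η z + kap * z) (Ici 0) := fun a ha b hb hab =>
      rp_mono hw1 ha hab (fun y hy => hpk y (le_trans (mem_Ici.1 ha) hy.1))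
    have hw0 : ∀ z ∈ Ici (0:ℝ), η 0 ≤ η z + kap * z := fun z hz => by
      simpa using hwm z0 hz hz
    set A : ℝ := 2 * (n * (η 0 ^ 2) ^ (n - 1)) with hA
    have hA0 : 0 ≤ A := by positivity
    have hge := rp_global (g := fun z => u z - η 0 ^ 2) (q := v)
      (r := fun z => 4 * kap * p z + 2 * kap * z * u z ^ n + 2 * p z ^ 2 + 2 * η z * u z ^ n)
      (c := fun z => A * (η z + kap * z))
      (fun z hz => by simpa using (hu1 z hz).sub_const (η 0 ^ 2)) hv1
      (fun z hz => mul_nonneg hA0 (hη0.le.trans (hw0 z hz)))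
      (fun a ha b hb hab => mul_le_mul_of_nonneg_left (hwm ha hb hab) hA0)
      (fun z hz => by
        have hb : n * (η 0 ^ 2) ^ (n - 1) * (u z - η 0 ^ 2) ≤ u z ^ n - (η 0 ^ 2) ^ n := by
          have ha : 0 < η 0 ^ 2 := by positivity
          generalize η 0 ^ 2 = a at ha
          have h1 := one_add_mul_le_pow (a := u z / a - 1)
            (by have := div_pos (hupos z hz) ha; linarith) n
          have h2 := mul_le_mul_of_nonneg_left h1 (pow_pos ha n).le
          rw [add_sub_cancel, div_pow, mul_div_cancel₀ _ (pow_pos ha n).ne'] at h2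
          have h3 : a ^ n = a ^ (n - 1) * a := by rw [← pow_succ]; congr 1; omega
          have h4 : a ^ n * (1 + n * (u z / a - 1)) = a ^ n + n * a ^ (n - 1) * (u z - a) := by
            rw [h3]; field_simp
          linarith
        have hw := hw0 z hz
        have hwb := mul_le_mul_of_nonneg_left hb (hη0.le.trans hw)
        have hk : kap ^ 2 ≤ (η z + kap * z) * (η 0 ^ 2) ^ n := by
          refine hcon.trans ?_
          rw [pow_succ, pow_mul, mul_comm]
          exact mul_le_mul_of_nonneg_right hw (by positivity)
        simp only [hA]
        nlinarith [sq_nonneg (p z + kap)])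
      (by simp [hu0]) (by simp [hv0])
    set b : ℝ := η 0 ^ (2 * n) with hb
    have hbpos : 0 < b := by positivity
    have hub : ∀ z ∈ Ici (0:ℝ), b ≤ u z ^ n := fun z hz => by
      rw [hb, pow_mul]
      exact pow_le_pow_left₀ (by positivity) (sub_nonneg.1 (hge z hz)) n
    have hpl : ∀ z ∈ Ici (0:ℝ), -kap + b * z ≤ p z := fun z hz => by
      have := rp_mono (f := fun z => p z - b * z) (f' := fun z => u z ^ n - b)
        (fun z hz => by exact ((hp1 z hz).sub ((hasDerivWithinAt_id z _).const_mul b)).congr_deriv (by simp))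
        le_rfl hz (fun y hy => sub_nonneg.2 (hub y hy.1))
      simp only [h0, mul_zero] at this
      linarith
    have hZ : 0 ≤ kap / b := by positivity
    have hfin : ∀ z ≥ kap / b, η (kap / b) ≤ η z := fun z hz =>
      rp_mono hη1 hZ hz (fun y hy => by
        have h1 := hpl y (hZ.trans hy.1)
        have h2 := (div_le_iff₀ hbpos).1 hy.1
        linarith)
    have := ge_of_tendsto hlim (eventually_atTop.2 ⟨_, hfin⟩)
    linarith [hpos (kap / b) hZ]
  refine ⟨hη0, h0, ?_, ?_, hd4, by positivity, ?_, main⟩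
  · rw [hd2 0 z0, hu0, pow_mul]
  · rw [hd3 0 z0, hv0, mul_zero]
  · have : 0 < (n : ℝ) := by exact_mod_cast (by omega : 0 < n)
    have := sub_pos.2 main
    positivity
end
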